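/- arXiv:cs/0207064 — 2 statements merged into one kernel-verified Lean document; each statement's English description precedes it below -/
import Mathlib

section
/- (Interpolation for Circumscription 2.) Let T be a set of propositional formulas and P, Q sets of variables such that P ∪ Q ⊇ L(T), and let L₂ be any set of variables. Then the set γ := Cn^{L(T) ∩ (L₂ ∪ P)}(T) satisfies: γ ⊆ 𝓛(T) ∩ 𝓛(L₂ ∪ P), T ⊨ γ, and for every formula φ ∈ 𝓛(L₂): Circ[T;P;Q] ⊨ φ if and only if Circ[γ;P;Q] ⊨ φ. -/
/-!
By compactness, the models of `Cn^S(T)` are exactly the valuations that agree on `S` with a model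
of `T`. The order `<_{P,Q}` only sees the variables in `P` and those outside `Q`, so if `S` contains
all of these then passing from `T` to `Cn^S(T)` commutes with taking minimal models, and the two
circumscriptions have the same consequences over `S`. Variables not occurring in `T` can be
adjoined to `S` without changing the models of `Cn^S(T)`, which reduces the condition on `S` to one
about the variables of `T`.
-/

namespace NMR

/-- Propositional formulas over a variable type `V`. -/
inductive PropForm (V : Type*) : Type _ where
  | var : V → PropForm V
  | tru : PropForm V
  | fls : PropForm V
  | neg : PropForm V → PropForm V
  | conj : PropForm V → PropForm V → PropForm V
  | disj : PropForm V → PropForm V → PropForm V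
  | impl : PropForm V → PropForm V → PropForm V

variable {V : Type*}

/-- Truth value of a formula under a valuation. -/
def PropForm.eval (ν : V → Bool) : PropForm V → Bool
  | .var v => ν v
  | .tru => true
  | .fls => false
  | .neg φ => !(φ.eval ν)
  | .conj φ ψ => φ.eval ν && ψ.eval ν
  | .disj φ ψ => φ.eval ν || ψ.eval ν
  | .impl φ ψ => !(φ.eval ν) || ψ.eval ν

/-- The set of variables occurring in a formula. -/
def PropForm.vars : PropForm V → Set V
  | .var v => {v}
  | .tru => ∅
  | .fls => ∅
  | .neg φ => φ.vars
  | .conj φ ψ => φ.vars ∪ ψ.vars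
  | .disj φ ψ => φ.vars ∪ ψ.vars
  | .impl φ ψ => φ.vars ∪ ψ.vars

/-- `ν ⊨ φ`. -/
def Sat (ν : V → Bool) (φ : PropForm V) : Prop := φ.eval ν = true

/-- `ν ⊨ T` for a set of formulas. -/
def SatSet (ν : V → Bool) (T : Set (PropForm V)) : Prop := ∀ φ ∈ T, Sat ν φ

/-- `T ⊨ φ`. -/
def Entails (T : Set (PropForm V)) (φ : PropForm V) : Prop :=
  ∀ ν : V → Bool, SatSet ν T → Sat ν φ

/-- `T ⊨ Γ` for a set `Γ`. -/
def EntailsSet (T Γ : Set (PropForm V)) : Prop := ∀ φ ∈ Γ, Entails T φ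

/-- A tautology is satisfied by every valuation. -/
def Tautology (φ : PropForm V) : Prop := ∀ ν : V → Bool, Sat ν φ

/-- `L(T)`: the set of variables occurring in a set of formulas. -/
def varsOf (T : Set (PropForm V)) : Set V := ⋃ φ ∈ T, φ.vars

/-- `𝓛(S)`: the set of formulas all of whose variables lie in `S`. -/
def FormsOver (S : Set V) : Set (PropForm V) := {φ | φ.vars ⊆ S}

/-- `Cn^S(T)`: the formulas in `𝓛(S)` entailed by `T`. -/
def Cn (S : Set V) (T : Set (PropForm V)) : Set (PropForm V) :=
  {φ | φ.vars ⊆ S ∧ Entails T φ}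

/-- Two sets of formulas are logically equivalent iff they have the same models. -/
def EquivTheories (T T' : Set (PropForm V)) : Prop :=
  ∀ ν : V → Bool, SatSet ν T ↔ SatSet ν T'

/-- `ν ≤_{P,Q} ν'`. -/
def circLe (P Q : Set V) (ν ν' : V → Bool) : Prop :=
  (∀ x, x ∉ P ∪ Q → ν x = ν' x) ∧
    {x | x ∈ P ∧ ν x = true} ⊆ {x | x ∈ P ∧ ν' x = true}

/-- `ν <_{P,Q} ν'`. -/
def circLt (P Q : Set V) (ν ν' : V → Bool) : Prop :=
  circLe P Q ν ν' ∧ {x | x ∈ P ∧ ν x = true} ⊂ {x | x ∈ P ∧ ν' x = true}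

/-- `ν` is a model of `Circ[T;P;Q]`. -/
def CircModel (T : Set (PropForm V)) (P Q : Set V) (ν : V → Bool) : Prop :=
  SatSet ν T ∧ ¬ ∃ ν' : V → Bool, SatSet ν' T ∧ circLt P Q ν' ν

/-- `Circ[T;P;Q] ⊨ φ`. -/
def CircEntails (T : Set (PropForm V)) (P Q : Set V) (φ : PropForm V) : Prop :=
  ∀ ν : V → Bool, CircModel T P Q ν → Sat ν φ

section Semantics

variable {ν μ : V → Bool} {S S' : Set V} {T : Set (PropForm V)} {φ : PropForm V}

theorem PropForm.eval_congr (h : Set.EqOn ν μ φ.vars) : φ.eval ν = φ.eval μ := by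
  induction φ with
  | var v => exact h rfl
  | tru | fls => rfl
  | neg φ ih => simp only [PropForm.eval, ih h]
  | conj φ ψ ihφ ihψ | disj φ ψ ihφ ihψ | impl φ ψ ihφ ihψ =>
    obtain ⟨hφ, hψ⟩ := Set.eqOn_union.1 h
    simp only [PropForm.eval, ihφ hφ, ihψ hψ]

theorem sat_congr (h : Set.EqOn ν μ φ.vars) : Sat ν φ ↔ Sat μ φ := by
  rw [Sat, Sat, PropForm.eval_congr h]

theorem satSet_congr (h : Set.EqOn ν μ (varsOf T)) : SatSet ν T ↔ SatSet μ T :=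
  forall₂_congr fun _ hφ => sat_congr (h.mono (Set.subset_biUnion_of_mem hφ))

theorem Cn_mono (h : S ⊆ S') : Cn S T ⊆ Cn S' T :=
  fun _ hφ => ⟨hφ.1.trans h, hφ.2⟩

end Semantics

section Compactness

theorem PropForm.continuous_eval (φ : PropForm V) : Continuous fun ν : V → Bool => φ.eval ν := by
  have comp₂ (op : Bool → Bool → Bool) {f g : (V → Bool) → Bool} (hf : Continuous f)
      (hg : Continuous g) : Continuous fun ν => op (f ν) (g ν) :=
    (continuous_of_discreteTopology (f := Function.uncurry op)).comp (hf.prodMk hg)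
  induction φ with
  | var v => exact continuous_apply v
  | tru | fls => exact continuous_const
  | neg φ ih => exact (continuous_of_discreteTopology (f := Bool.not)).comp ih
  | conj φ ψ ihφ ihψ => exact comp₂ (· && ·) ihφ ihψ
  | disj φ ψ ihφ ihψ => exact comp₂ (· || ·) ihφ ihψ
  | impl φ ψ ihφ ihψ => exact comp₂ (!· || ·) ihφ ihψ

theorem isClosed_setOfPred_satSet (T : Set (PropForm V)) :
    IsClosed {ν : V → Bool | SatSet ν T} := by
  have models_eq : {ν : V → Bool | SatSet ν T} = ⋂ φ ∈ T, {ν | φ.eval ν = true} := by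
    ext ν
    simp [SatSet, Sat]
  rw [models_eq]
  exact isClosed_biInter fun φ _ => isClosed_eq φ.continuous_eval continuous_const

theorem exists_literal (x : V) (b : Bool) :
    ∃ φ : PropForm V, φ.vars = {x} ∧ ∀ ν, Sat ν φ ↔ ν x = b := by
  cases b
  · exact ⟨.neg (.var x), rfl, fun ν => by simp [Sat, PropForm.eval]⟩
  · exact ⟨.var x, rfl, fun ν => Iff.rfl⟩

theorem exists_separating_formula {K : Set (V → Bool)} (hK : IsCompact K) {S : Set V}
    {ν : V → Bool} (hν : ∀ μ ∈ K, ¬ Set.EqOn μ ν S) :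
    ∃ φ : PropForm V, φ.vars ⊆ S ∧ (∀ μ ∈ K, Sat μ φ) ∧ ¬ Sat ν φ := by
  -- The sets that a formula over `S` separates from `ν` are closed under finite unions (take
  -- disjunctions), and a literal separates a neighbourhood of each point of `K`.
  refine hK.induction_on
    (p := fun A => ∃ φ : PropForm V, φ.vars ⊆ S ∧ (∀ μ ∈ A, Sat μ φ) ∧ ¬ Sat ν φ) ?_ ?_ ?_ ?_
  · exact ⟨.fls, Set.empty_subset S, by simp, Bool.false_ne_true⟩
  · rintro A B hAB ⟨φ, hφS, hφB, hφν⟩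
    exact ⟨φ, hφS, fun μ hμ => hφB μ (hAB hμ), hφν⟩
  · rintro A B ⟨φ, hφS, hφA, hφν⟩ ⟨ψ, hψS, hψB, hψν⟩
    have sat_disj (μ : V → Bool) : Sat μ (.disj φ ψ) ↔ Sat μ φ ∨ Sat μ ψ := Bool.or_eq_true_iff
    refine ⟨.disj φ ψ, Set.union_subset hφS hψS, fun μ hμ => ?_, ?_⟩
    · exact (sat_disj μ).2 (hμ.imp (hφA μ) (hψB μ))
    · exact mt (sat_disj ν).1 (not_or.2 ⟨hφν, hψν⟩)
  · intro μ hμ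
    obtain ⟨x, hxS, hx⟩ : ∃ x ∈ S, μ x ≠ ν x := by simpa [Set.EqOn] using hν μ hμ
    obtain ⟨φ, hφ, sat_iff⟩ := exists_literal x (μ x)
    have nhds_μ : (fun κ : V → Bool => κ x) ⁻¹' {μ x} ∈ nhds μ :=
      ((isOpen_discrete _).preimage (continuous_apply x)).mem_nhds (Set.mem_singleton _)
    refine ⟨_, mem_nhdsWithin_of_mem_nhds nhds_μ, φ, ?_, fun κ hκ => (sat_iff κ).2 hκ, ?_⟩
    · rwa [hφ, Set.singleton_subset_iff]
    · exact fun hν => hx ((sat_iff ν).1 hν).symm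

theorem satSet_Cn_iff {T : Set (PropForm V)} {S : Set V} {ν : V → Bool} :
    SatSet ν (Cn S T) ↔ ∃ μ, SatSet μ T ∧ Set.EqOn μ ν S := by
  constructor
  · intro hν
    by_contra! no_model
    obtain ⟨φ, hφS, hφT, hφν⟩ :=
      exists_separating_formula (isClosed_setOfPred_satSet T).isCompact no_model
    exact hφν (hν φ ⟨hφS, hφT⟩)
  · rintro ⟨μ, hμ, hμν⟩ φ ⟨hφS, hφT⟩
    exact (sat_congr (hμν.mono hφS)).1 (hφT μ hμ)

theorem equivTheories_Cn_union_compl_varsOf (S : Set V) (T : Set (PropForm V)) :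
    EquivTheories (Cn (S ∪ (varsOf T)ᶜ) T) (Cn S T) := by
  classical
  refine fun ν => ⟨fun h φ hφ => h φ (Cn_mono Set.subset_union_left hφ), fun h => ?_⟩
  obtain ⟨μ, hμ, hμν⟩ := satSet_Cn_iff.1 h
  let κ := (varsOf T).piecewise μ ν
  have hκμ : Set.EqOn κ μ (varsOf T) := Set.piecewise_eqOn _ μ ν
  have hκν : Set.EqOn κ ν (varsOf T)ᶜ := Set.piecewise_eqOn_compl _ μ ν
  have hκνS : Set.EqOn κ ν S := fun x hx => by
    by_cases hxT : x ∈ varsOf T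
    · exact (hκμ hxT).trans (hμν hx)
    · exact hκν hxT
  exact satSet_Cn_iff.2 ⟨κ, (satSet_congr hκμ).2 hμ, hκνS.union hκν⟩

end Compactness

section Circumscription

variable {T T' : Set (PropForm V)} {P Q S : Set V} {φ : PropForm V}

theorem EquivTheories.circEntails_iff (h : EquivTheories T T') :
    CircEntails T P Q φ ↔ CircEntails T' P Q φ := by
  simp only [CircEntails, CircModel, h _]

theorem circLt_congr {ν ν' μ μ' : V → Bool} (hν : Set.EqOn ν ν' (P ∪ Qᶜ))
    (hμ : Set.EqOn μ μ' (P ∪ Qᶜ)) : circLt P Q ν μ ↔ circLt P Q ν' μ' := by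
  have fixed_iff : (∀ x, x ∉ P ∪ Q → ν x = μ x) ↔ ∀ x, x ∉ P ∪ Q → ν' x = μ' x :=
    forall₂_congr fun x hx => by
      have hxQ : x ∈ P ∪ Qᶜ := Or.inr fun h => hx (Or.inr h)
      rw [hν hxQ, hμ hxQ]
  have trueVars_congr {κ κ' : V → Bool} (hκ : Set.EqOn κ κ' (P ∪ Qᶜ)) :
      {x | x ∈ P ∧ κ x = true} = {x | x ∈ P ∧ κ' x = true} :=
    Set.ext fun x => and_congr_right fun hx => by rw [hκ (Or.inl hx)]
  simp only [circLt, circLe, fixed_iff, trueVars_congr hν, trueVars_congr hμ]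

theorem circModel_Cn_iff (hS : P ∪ Qᶜ ⊆ S) {ν : V → Bool} :
    CircModel (Cn S T) P Q ν ↔ ∃ μ, CircModel T P Q μ ∧ Set.EqOn μ ν S := by
  constructor
  · rintro ⟨hν, ν_min⟩
    obtain ⟨μ, hμ, hμν⟩ := satSet_Cn_iff.1 hν
    refine ⟨μ, ⟨hμ, ?_⟩, hμν⟩
    rintro ⟨κ, hκ, κ_lt⟩
    exact ν_min ⟨κ, satSet_Cn_iff.2 ⟨κ, hκ, Set.eqOn_refl κ S⟩,
      (circLt_congr (Set.eqOn_refl κ _) (hμν.mono hS)).1 κ_lt⟩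
  · rintro ⟨μ, ⟨hμ, μ_min⟩, hμν⟩
    refine ⟨satSet_Cn_iff.2 ⟨μ, hμ, hμν⟩, ?_⟩
    rintro ⟨κ, hκ, κ_lt⟩
    obtain ⟨κ', hκ', hκκ'⟩ := satSet_Cn_iff.1 hκ
    exact μ_min ⟨κ', hκ', (circLt_congr (hκκ'.mono hS) (hμν.mono hS)).2 κ_lt⟩

theorem circEntails_Cn_iff (hS : P ∪ Qᶜ ⊆ S) (hφ : φ.vars ⊆ S) :
    CircEntails (Cn S T) P Q φ ↔ CircEntails T P Q φ := by
  constructor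
  · exact fun h ν hν => h ν ((circModel_Cn_iff hS).2 ⟨ν, hν, Set.eqOn_refl ν S⟩)
  · intro h ν hν
    obtain ⟨μ, hμ, hμν⟩ := (circModel_Cn_iff hS).1 hν
    exact (sat_congr (hμν.mono hφ)).1 (h μ hμ)

theorem circEntails_Cn_iff_of_varsOf_inter_subset (hS : varsOf T ∩ (P ∪ Qᶜ) ⊆ S)
    (hφ : varsOf T ∩ φ.vars ⊆ S) : CircEntails (Cn S T) P Q φ ↔ CircEntails T P Q φ := by
  rw [Set.inter_comm, Set.inter_subset, Set.union_comm _ S] at hS hφ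
  exact (equivTheories_Cn_union_compl_varsOf S T).circEntails_iff.symm.trans
    (circEntails_Cn_iff hS hφ)

end Circumscription

theorem interpolation_circ2_general (T : Set (PropForm V)) (P Q L₂ : Set V)
    (hL : varsOf T ⊆ L₂ ∪ P ∪ Q) :
    Cn (varsOf T ∩ (L₂ ∪ P)) T ⊆ FormsOver (varsOf T) ∩ FormsOver (L₂ ∪ P) ∧
    EntailsSet T (Cn (varsOf T ∩ (L₂ ∪ P)) T) ∧
    ∀ φ ∈ FormsOver L₂,
      (CircEntails T P Q φ ↔
        CircEntails (Cn (varsOf T ∩ (L₂ ∪ P)) T) P Q φ) := by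
  refine ⟨fun φ hφ => Set.subset_inter_iff.1 hφ.1, fun φ hφ => hφ.2, fun φ hφ => ?_⟩
  refine (circEntails_Cn_iff_of_varsOf_inter_subset ?_ ?_).symm
  · rintro x ⟨hxT, hxP | hxQ⟩
    · exact ⟨hxT, Or.inr hxP⟩
    · exact ⟨hxT, (hL hxT).resolve_right hxQ⟩
  · exact Set.inter_subset_inter_right _ (hφ.trans Set.subset_union_left)

/-- Interpolation for Circumscription 2. -/
theorem interpolation_circ2 {V : Type*} (T : Set (PropForm V)) (P Q : Set V)
    (hL : varsOf T ⊆ P ∪ Q) (L₂ : Set V) :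
    Cn (varsOf T ∩ (L₂ ∪ P)) T ⊆ FormsOver (varsOf T) ∩ FormsOver (L₂ ∪ P) ∧
    EntailsSet T (Cn (varsOf T ∩ (L₂ ∪ P)) T) ∧
    ∀ φ ∈ FormsOver L₂,
      (CircEntails T P Q φ ↔
        CircEntails (Cn (varsOf T ∩ (L₂ ∪ P)) T) P Q φ) :=
  interpolation_circ2_general T P Q L₂
    (hL.trans (Set.union_subset_union_left Q Set.subset_union_right))

end NMR
end

section
/- (Interpolation for Cautious Default Logic 1.) Let ⟨W, D⟩ be a propositional default theory over a finite variable set and φ a propositional formula. If W |~_D φ, then there exist formulas γ₁ ∈ 𝓛(W) ∩ 𝓛(D ∪ {φ}) and γ₂ ∈ 𝓛(W ∪ D) ∩ 𝓛(φ) such that all of the following hold: W ⊨ γ₁, {γ₁} |~_D γ₂, γ₂ ⊨ φ, W |~_D γ₂, and {γ₁} |~_D φ. -/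
namespace NMR

variable {V : Type*}

/-- A Reiter default: prerequisite, a finite nonempty set of justifications,
and a consequent. -/
structure Default (V : Type*) where
  pre : PropForm V
  just : Set (PropForm V)
  just_finite : just.Finite
  just_nonempty : just.Nonempty
  cons : PropForm V

/-- All propositional consequences of `T`. -/
def CnAll (T : Set (PropForm V)) : Set (PropForm V) := {φ | Entails T φ}

/-- The closure conditions defining `Γ(S₀)` for the default theory `⟨W, D⟩`:
`W ⊆ S`, `Cn(S) = S`, and closure under the defaults applicable w.r.t. `S₀`. -/
def DLClosed (W : Set (PropForm V)) (D : Set (Default V)) (S₀ S : Set (PropForm V)) : Prop :=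
  W ⊆ S ∧ CnAll S = S ∧
    ∀ d ∈ D, d.pre ∈ S → (∀ β ∈ d.just, PropForm.neg β ∉ S₀) → d.cons ∈ S

/-- `Γ(S₀)`: the least set satisfying the closure conditions (the intersection
of all such sets, which is itself such a set). -/
def GammaOp (W : Set (PropForm V)) (D : Set (Default V)) (S₀ : Set (PropForm V)) :
    Set (PropForm V) := ⋂₀ {S | DLClosed W D S₀ S}

/-- `E` is an extension of `⟨W, D⟩` iff `Γ(E) = E`. -/
def IsExtension (W : Set (PropForm V)) (D : Set (Default V)) (E : Set (PropForm V)) : Prop :=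
  GammaOp W D E = E

/-- Cautious entailment `W |~_D φ`. -/
def Cautious (W : Set (PropForm V)) (D : Set (Default V)) (φ : PropForm V) : Prop :=
  ∀ E : Set (PropForm V), IsExtension W D E → φ ∈ E

/-- Brave entailment `W |~^b_D φ`. -/
def Brave (W : Set (PropForm V)) (D : Set (Default V)) (φ : PropForm V) : Prop :=
  ∃ E : Set (PropForm V), IsExtension W D E ∧ φ ∈ E

/-- `L(D)`: the variables occurring in prerequisites, justifications or
consequents of defaults in `D`. -/
def varsD (D : Set (Default V)) : Set V :=
  ⋃ d ∈ D, (d.pre.vars ∪ (⋃ β ∈ d.just, PropForm.vars β) ∪ d.cons.vars)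

/-! The strongest consequence `γ₁` of `W` over the variables of `D` and `φ` does the first half. If
`E` is an extension of `⟨{γ₁}, D⟩`, then every model of `E` can be altered outside those variables
so that it also satisfies `W`. Hence `Cn(E ∪ W)` proves no more than `E` over the variables of `D`
and `φ`: the same defaults apply, `Cn(E ∪ W)` is an extension of `⟨W, D⟩`, and `φ ∈ Cn(E ∪ W)` comes
back to `E`.

Dually, let `γ₂` be the weakest formula over the variables of `W` and `D` that entails `φ`. Every
extension is axiomatized over the variables of its default theory, so it contains `γ₂` as soon as it
contains `φ`. -/

open Set

variable {W U T T' E S S₀ : Set (PropForm V)} {D : Set (Default V)} {A K : Set V}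
  {φ γ : PropForm V} {ν : V → Bool}

section Semantics

theorem PropForm.finite_vars (φ : PropForm V) : φ.vars.Finite := by
  induction φ <;> simp_all [PropForm.vars]

theorem PropForm.dependsOn_eval (φ : PropForm V) : DependsOn (fun ν ↦ φ.eval ν) φ.vars := by
  intro ν μ h
  induction φ <;> simp_all [PropForm.eval, PropForm.vars, or_imp, forall_and]

theorem dependsOn_sat (hφ : φ ∈ FormsOver A) : DependsOn (Sat · φ) A := fun _ _ h ↦
  congrArg (· = true) (φ.dependsOn_eval fun v hv ↦ h v (hφ hv))

theorem dependsOn_satSet (hT : T ⊆ FormsOver A) : DependsOn (SatSet · T) A := fun _ _ h ↦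
  propext <| forall₂_congr fun _ hφ ↦ Eq.to_iff (dependsOn_sat (hT hφ) h)

theorem subset_formsOver_varsOf (T : Set (PropForm V)) : T ⊆ FormsOver (varsOf T) :=
  fun _ hφ ↦ subset_biUnion_of_mem (u := PropForm.vars) hφ

theorem neg_mem_formsOver : φ.neg ∈ FormsOver A ↔ φ ∈ FormsOver A :=
  Iff.rfl

theorem varsOf_singleton (φ : PropForm V) : varsOf {φ} = φ.vars :=
  biUnion_singleton φ PropForm.vars

theorem satSet_singleton : SatSet ν {φ} ↔ Sat ν φ :=
  forall_eq

theorem sat_neg : Sat ν φ.neg ↔ ¬ Sat ν φ := by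
  simp [Sat, PropForm.eval]

end Semantics

section Projection

-- Induction on `A`, by the Shannon expansion `P ν = (v ∧ P (ν[v := ⊤])) ∨ (¬v ∧ P (ν[v := ⊥]))`.
theorem exists_sat_iff_of_dependsOn (hA : A.Finite) {P : (V → Bool) → Prop} (hP : DependsOn P A) :
    ∃ γ ∈ FormsOver A, ∀ ν, Sat ν γ ↔ P ν := by
  classical
  induction A, hA using Set.Finite.induction_on generalizing P with
  | empty =>
    have hconst (ν : V → Bool) : P ν ↔ P fun _ ↦ true := Eq.to_iff (hP fun _ hv ↦ hv.elim)
    by_cases h : P fun _ ↦ true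
    · exact ⟨.tru, empty_subset _, fun ν ↦ by simp [Sat, PropForm.eval, hconst ν, h]⟩
    · exact ⟨.fls, empty_subset _, fun ν ↦ by simp [Sat, PropForm.eval, hconst ν, h]⟩
  | @insert v A _ _ ih =>
    have hcofactor (b : Bool) : DependsOn (fun ν ↦ P (Function.update ν v b)) A := by
      refine fun ν μ h ↦ hP fun w hw ↦ ?_
      by_cases hwv : w = v
      · simp [hwv]
      · simp [hwv, h w (hw.resolve_left hwv)]
    choose γ hγA hγ using fun b ↦ ih (hcofactor b)
    refine ⟨.disj (.conj (.var v) (γ true)) (.conj (.neg (.var v)) (γ false)), ?_, fun ν ↦ ?_⟩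
    · have hvars (b : Bool) : (γ b).vars ⊆ insert v A := (hγA b).trans (subset_insert v A)
      simp [FormsOver, PropForm.vars, insert_subset_iff, hvars]
    · have hν : P ν ↔ P (Function.update ν v (ν v)) := by rw [Function.update_eq_self]
      rw [hν, ← hγ]
      cases hv : ν v <;> simp [Sat, PropForm.eval, hv]

theorem dependsOn_exists_eqOn {P : (V → Bool) → Prop} (hP : DependsOn P A) (K : Set V) :
    DependsOn (fun ν ↦ ∃ ν', EqOn ν ν' K ∧ P ν') (A ∩ K) := by
  classical
  have transfer {ν μ : V → Bool} (h : EqOn ν μ (A ∩ K)) :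
      (∃ ν', EqOn ν ν' K ∧ P ν') → ∃ μ', EqOn μ μ' K ∧ P μ' := by
    rintro ⟨ν', hνν', hν'⟩
    refine ⟨K.piecewise μ ν', (piecewise_eqOn K μ ν').symm, ?_⟩
    have hglue : EqOn ν' (K.piecewise μ ν') A := fun v hvA ↦ by
      by_cases hvK : v ∈ K
      · rw [piecewise_eq_of_mem _ _ _ hvK, ← h ⟨hvA, hvK⟩, hνν' hvK]
      · rw [piecewise_eq_of_notMem _ _ _ hvK]
    exact Eq.mp (hP hglue) hν'
  exact fun ν μ h ↦ propext ⟨transfer h, transfer (EqOn.symm h)⟩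

/-- `γ` is the projection of the theory `T` onto the variables `K`, the strongest consequence of `T`
over `K`: it says that some way of changing the valuation outside `K` makes `T` true. Stated by its
models, so `γ` is determined up to equivalence only and its variables are not restricted. The dual
notion, the weakest formula over `K` entailing `φ`, is the negation of a projection of `{¬φ}`. -/
def IsProjection (T : Set (PropForm V)) (K : Set V) (γ : PropForm V) : Prop :=
  ∀ ν, Sat ν γ ↔ ∃ ν', EqOn ν ν' K ∧ SatSet ν' T

theorem exists_isProjection (hfin : (varsOf T ∩ K).Finite) :
    ∃ γ ∈ FormsOver (varsOf T ∩ K), IsProjection T K γ :=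
  exists_sat_iff_of_dependsOn hfin
    (dependsOn_exists_eqOn (dependsOn_satSet (subset_formsOver_varsOf T)) K)

theorem IsProjection.entails (hγ : IsProjection T K γ) : Entails T γ := fun ν hν ↦
  (hγ ν).2 ⟨ν, eqOn_refl ν K, hν⟩

theorem IsProjection.sat_neg_iff (hγ : IsProjection {φ.neg} K γ) :
    Sat ν γ.neg ↔ ∀ ν', EqOn ν ν' K → Sat ν' φ := by
  simp only [sat_neg, hγ ν, satSet_singleton, not_exists, not_and, not_not]

theorem IsProjection.neg_entails (hγ : IsProjection {φ.neg} K γ) : Entails {γ.neg} φ := fun ν hν ↦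
  hγ.sat_neg_iff.1 (satSet_singleton.1 hν) ν (eqOn_refl ν K)

end Projection

section Consequence

theorem subset_cnAll (T : Set (PropForm V)) : T ⊆ CnAll T := fun _ hφ _ hν ↦ hν _ hφ

theorem cnAll_mono (h : T ⊆ T') : CnAll T ⊆ CnAll T' := fun _ hφ ν hν ↦
  hφ ν fun ψ hψ ↦ hν ψ (h hψ)

theorem satSet_cnAll : SatSet ν (CnAll T) ↔ SatSet ν T :=
  ⟨fun h ψ hψ ↦ h ψ (subset_cnAll T hψ), fun h _ hψ ↦ hψ ν h⟩

theorem cnAll_cnAll (T : Set (PropForm V)) : CnAll (CnAll T) = CnAll T :=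
  ext fun _ ↦ forall_congr' fun _ ↦ imp_congr_left satSet_cnAll

theorem IsProjection.cnAll_union_inter_formsOver_subset (hγ : IsProjection T K γ) (hγE : γ ∈ E)
    (hE : DependsOn (SatSet · E) K) : CnAll (E ∪ T) ∩ FormsOver K ⊆ CnAll E := by
  rintro ψ ⟨hψ, hψK⟩ ν hν
  obtain ⟨ν', hνν', hν'T⟩ := (hγ ν).1 (hν γ hγE)
  have hν'E : SatSet ν' E := Eq.mp (hE hνν') hν
  have hν'ψ : Sat ν' ψ := hψ ν' fun χ hχ ↦ hχ.elim (hν'E χ) (hν'T χ)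
  exact Eq.mpr (dependsOn_sat hψK hνν') hν'ψ

end Consequence

section Extensions

theorem DLClosed.cnAll_subset (hS : DLClosed W D S₀ S) (hT : T ⊆ S) : CnAll T ⊆ S :=
  (cnAll_mono hT).trans hS.2.1.subset

theorem gammaOp_subset (hS : DLClosed W D S₀ S) : GammaOp W D S₀ ⊆ S :=
  sInter_subset_of_mem hS

theorem dlClosed_gammaOp (W : Set (PropForm V)) (D : Set (Default V)) (S₀ : Set (PropForm V)) :
    DLClosed W D S₀ (GammaOp W D S₀) := by
  refine ⟨subset_sInter fun S hS ↦ hS.1, Subset.antisymm ?_ (subset_cnAll _), ?_⟩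
  · exact subset_sInter fun S hS ↦ hS.cnAll_subset (gammaOp_subset hS)
  · exact fun d hd hpre hjust S hS ↦ hS.2.2 d hd (gammaOp_subset hS hpre) hjust

theorem IsExtension.dlClosed (hE : IsExtension W D E) : DLClosed W D E E := by
  simpa only [show GammaOp W D E = E from hE] using dlClosed_gammaOp W D E

theorem IsExtension.subset_of_dlClosed (hE : IsExtension W D E) (hS : DLClosed W D E S) : E ⊆ S :=
  (show GammaOp W D E = E from hE).superset.trans (gammaOp_subset hS)

theorem pre_mem_formsOver_varsD {d : Default V} (hd : d ∈ D) : d.pre ∈ FormsOver (varsD D) :=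
  fun _ hv ↦ mem_biUnion hd (.inl (.inl hv))

theorem just_mem_formsOver_varsD {d : Default V} (hd : d ∈ D) {β : PropForm V} (hβ : β ∈ d.just) :
    β ∈ FormsOver (varsD D) :=
  fun _ hv ↦ mem_biUnion hd (.inl (.inr (mem_biUnion hβ hv)))

theorem cons_mem_formsOver_varsD {d : Default V} (hd : d ∈ D) : d.cons ∈ FormsOver (varsD D) :=
  fun _ hv ↦ mem_biUnion hd (.inr hv)

theorem IsExtension.eq_cnAll_inter_formsOver (hE : IsExtension W D E) (hW : varsOf W ⊆ A)
    (hD : varsD D ⊆ A) : E = CnAll (E ∩ FormsOver A) := by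
  have hsub : CnAll (E ∩ FormsOver A) ⊆ E := hE.dlClosed.cnAll_subset inter_subset_left
  obtain ⟨hWE, -, hdefaults⟩ := hE.dlClosed
  refine Subset.antisymm (hE.subset_of_dlClosed ⟨?_, cnAll_cnAll _, ?_⟩) hsub
  · exact fun ψ hψ ↦ subset_cnAll _ ⟨hWE hψ, (subset_formsOver_varsOf W hψ).trans hW⟩
  · exact fun d hd hpre hjust ↦ subset_cnAll _
      ⟨hdefaults d hd (hsub hpre) hjust, (cons_mem_formsOver_varsD hd).trans hD⟩

theorem IsExtension.dependsOn_satSet (hE : IsExtension W D E) (hW : varsOf W ⊆ A)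
    (hD : varsD D ⊆ A) : DependsOn (SatSet · E) A := by
  rw [hE.eq_cnAll_inter_formsOver hW hD]
  simpa only [satSet_cnAll] using NMR.dependsOn_satSet inter_subset_right

theorem IsExtension.cnAll_union (hE : IsExtension U D E) (hWU : EntailsSet W U)
    (hcons : CnAll (E ∪ W) ∩ FormsOver (varsD D) ⊆ E) : IsExtension W D (CnAll (E ∪ W)) := by
  have hEW : E ⊆ CnAll (E ∪ W) := subset_union_left.trans (subset_cnAll _)
  refine Subset.antisymm (gammaOp_subset ⟨?_, cnAll_cnAll _, ?_⟩) (subset_sInter fun S hS ↦ ?_)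
  · exact subset_union_right.trans (subset_cnAll _)
  · exact fun d hd hpre hjust ↦ hEW <| hE.dlClosed.2.2 d hd
      (hcons ⟨hpre, pre_mem_formsOver_varsD hd⟩) fun β hβ hβE ↦ hjust β hβ (hEW hβE)
  · have hES : E ⊆ S := by
      refine hE.subset_of_dlClosed ⟨fun ψ hψ ↦ hS.cnAll_subset hS.1 (hWU ψ hψ), hS.2.1, ?_⟩
      exact fun d hd hpre hjust ↦ hS.2.2 d hd hpre fun β hβ hβEW ↦
        hjust β hβ (hcons ⟨hβEW, neg_mem_formsOver.2 (just_mem_formsOver_varsD hd hβ)⟩)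
    exact hS.cnAll_subset (union_subset hES hS.1)

end Extensions

section Interpolation

theorem Cautious.of_isProjection (h : Cautious W D φ) (hγ : IsProjection W K γ)
    (hγK : γ ∈ FormsOver K) (hD : varsD D ⊆ K) (hφ : φ ∈ FormsOver K) : Cautious {γ} D φ := by
  intro E hE
  have hEK : DependsOn (SatSet · E) K :=
    hE.dependsOn_satSet ((varsOf_singleton γ).trans_subset hγK) hD
  have hcons : CnAll (E ∪ W) ∩ FormsOver K ⊆ E :=
    (hγ.cnAll_union_inter_formsOver_subset (hE.dlClosed.1 rfl) hEK).trans hE.dlClosed.2.1.subset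
  have hext : IsExtension W D (CnAll (E ∪ W)) :=
    hE.cnAll_union (fun _ hψ ↦ hψ ▸ hγ.entails) fun _ hψ ↦ hcons ⟨hψ.1, hψ.2.trans hD⟩
  exact hcons ⟨h _ hext, hφ⟩

theorem Cautious.neg_of_isProjection (h : Cautious W D φ) (hγ : IsProjection {φ.neg} K γ)
    (hW : varsOf W ⊆ K) (hD : varsD D ⊆ K) : Cautious W D γ.neg := by
  intro E hE
  refine hE.dlClosed.cnAll_subset subset_rfl fun ν hν ↦ hγ.sat_neg_iff.2 fun ν' hνν' ↦ ?_
  have hν' : SatSet ν' E := Eq.mp (hE.dependsOn_satSet hW hD hνν') hν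
  exact hν' φ (h E hE)

theorem interpolation_cautious_dl1_general {V : Type*}
    (W : Set (PropForm V)) (D : Set (Default V)) (φ : PropForm V)
    (hfin : (varsOf W ∩ varsD D).Finite) (h : Cautious W D φ) :
    ∃ γ₁ γ₂ : PropForm V,
      γ₁.vars ⊆ varsOf W ∩ (varsD D ∪ φ.vars) ∧
      γ₂.vars ⊆ (varsOf W ∪ varsD D) ∩ φ.vars ∧
      Entails W γ₁ ∧
      Cautious {γ₁} D γ₂ ∧
      Entails {γ₂} φ ∧
      Cautious W D γ₂ ∧
      Cautious {γ₁} D φ := by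
  obtain ⟨γ₁, hγ₁, hproj₁⟩ : ∃ γ ∈ FormsOver (varsOf W ∩ (varsD D ∪ φ.vars)),
      IsProjection W (varsD D ∪ φ.vars) γ := by
    refine exists_isProjection ?_
    rw [inter_union_distrib_left]
    exact hfin.union (φ.finite_vars.inter_of_right _)
  obtain ⟨δ, hδ, hprojδ⟩ : ∃ δ ∈ FormsOver (φ.vars ∩ (varsOf W ∪ varsD D)),
      IsProjection {φ.neg} (varsOf W ∪ varsD D) δ := by
    have hvars : varsOf {φ.neg} = φ.vars := varsOf_singleton φ.neg
    exact hvars ▸ exists_isProjection (hvars ▸ φ.finite_vars.inter_of_left _)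
  have hφ : Cautious {γ₁} D φ := h.of_isProjection hproj₁ (hγ₁.trans inter_subset_right)
    subset_union_left subset_union_right
  have hW₁ : varsOf {γ₁} ⊆ varsOf W ∪ varsD D := (varsOf_singleton γ₁).trans_subset
    (hγ₁.trans (inter_subset_left.trans subset_union_left))
  exact ⟨γ₁, δ.neg, hγ₁, hδ.trans (inter_comm _ _).subset, hproj₁.entails,
    hφ.neg_of_isProjection hprojδ hW₁ subset_union_right, hprojδ.neg_entails,
    h.neg_of_isProjection hprojδ subset_union_left subset_union_right, hφ⟩

end Interpolation

/-- Interpolation for Cautious Default Logic 1. -/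
theorem interpolation_cautious_dl1 {V : Type*} [Finite V]
    (W : Set (PropForm V)) (D : Set (Default V)) (φ : PropForm V)
    (h : Cautious W D φ) :
    ∃ γ₁ γ₂ : PropForm V,
      γ₁.vars ⊆ varsOf W ∩ (varsD D ∪ φ.vars) ∧
      γ₂.vars ⊆ (varsOf W ∪ varsD D) ∩ φ.vars ∧
      Entails W γ₁ ∧
      Cautious {γ₁} D γ₂ ∧
      Entails {γ₂} φ ∧
      Cautious W D γ₂ ∧
      Cautious {γ₁} D φ :=
  interpolation_cautious_dl1_general W D φ (Set.toFinite _) h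

end NMR
end
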